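/- Let D be an ADF and let v be an interpretation of D. If an argument a is strongly acceptable/deniable with respect to v and a least set S for a, then every s ∈ S satisfies v(s) ∈ {t, f} and is strongly acceptable (if v(s) = t) resp. strongly deniable (if v(s) = f) with respect to v and some set S' ⊆ S. -/

import Mathlib

/-- Three truth values: true, false, undecided. -/
inductive TV : Type
  | t | f | u
deriving DecidableEq, Repr

/-- The information order on truth values: u <_i t and u <_i f. -/
def TV.ile (x y : TV) : Prop := x = TV.u ∨ x = y

/-- The information order on interpretations, extended pointwise. -/
def ILE {A : Type*} (v w : A → TV) : Prop := ∀ a, TV.ile (v a) (w a)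

/-- An abstract dialectical framework on a set of arguments `A`:
each argument `a` has an acceptance condition `C a : (A → Bool) → Bool`. -/
structure ADF (A : Type*) where
  C : A → (A → Bool) → Bool

/-- The trivial interpretation mapping every argument to undecided. -/
def trivialInterp (A : Type*) : A → TV := fun _ => TV.u

/-- The parents of `a` are the arguments on which its acceptance condition depends. -/
def ADF.parents {A : Type*} [DecidableEq A] (D : ADF A) (a : A) : Set A :=
  {b | ∃ w : A → Bool, D.C a w ≠ D.C a (Function.update w b (!w b))}

/-- A two-valued assignment `w` completes a three-valued interpretation `v`. -/
def Completes {A : Type*} (w : A → Bool) (v : A → TV) : Prop :=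
  ∀ b, (v b = TV.t → w b = true) ∧ (v b = TV.f → w b = false)

/-- `φ` is irrefutable under `v`: every completion of `v` makes `φ` true. -/
def Irrefutable {A : Type*} (φ : (A → Bool) → Bool) (v : A → TV) : Prop :=
  ∀ w : A → Bool, Completes w v → φ w = true

/-- `φ` is unsatisfiable under `v`: every completion of `v` makes `φ` false. -/
def Unsat {A : Type*} (φ : (A → Bool) → Bool) (v : A → TV) : Prop :=
  ∀ w : A → Bool, Completes w v → φ w = false

open Classical in
/-- The characteristic operator Γ_D of an ADF. -/
noncomputable def Gamma {A : Type*} (D : ADF A) (v : A → TV) : A → TV := fun a =>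
  if Irrefutable (D.C a) v then TV.t
  else if Unsat (D.C a) v then TV.f
  else TV.u

open Classical in
/-- `v|_P`: agrees with `v` on `P` and is undecided elsewhere. -/
noncomputable def restrictTV {A : Type*} (v : A → TV) (P : Set A) : A → TV :=
  fun b => if b ∈ P then v b else TV.u

/-- Strong acceptability/deniability of an argument with respect to interpretation `v`
and set `S`, relative to an excluded set `E` (the first index). An argument `a` with
`v a = t` (resp. `v a = f`) is strongly acceptable (resp. strongly deniable) iff there is
`P ⊆ (parents a ∩ S) \ E` with `φ_a^{v|_P}` irrefutable (resp. unsatisfiable) and every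
`p ∈ P` strongly acceptable/deniable relative to `E ∪ {p}`. -/
inductive SJrel {A : Type*} [DecidableEq A] (D : ADF A) (v : A → TV) (S : Set A) :
    Set A → A → Prop
  | acc (E : Set A) (a : A) (P : Set A)
      (ha : v a = TV.t)
      (hP : P ⊆ (D.parents a ∩ S) \ E)
      (hirr : Irrefutable (D.C a) (restrictTV v P))
      (hrec : ∀ p ∈ P, SJrel D v S (E ∪ {p}) p) : SJrel D v S E a
  | den (E : Set A) (a : A) (P : Set A)
      (ha : v a = TV.f)
      (hP : P ⊆ (D.parents a ∩ S) \ E)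
      (hunsat : Unsat (D.C a) (restrictTV v P))
      (hrec : ∀ p ∈ P, SJrel D v S (E ∪ {p}) p) : SJrel D v S E a

/-- `a` is strongly acceptable/deniable w.r.t. `v` and `S`
(i.e., relative to the excluded set `{a}`). -/
def StronglyJustified {A : Type*} [DecidableEq A] (D : ADF A) (v : A → TV)
    (S : Set A) (a : A) : Prop :=
  SJrel D v S {a} a

/-- `S` is a least set for `a` with respect to `v`. -/
def LeastSet {A : Type*} [DecidableEq A] (D : ADF A) (v : A → TV)
    (a : A) (S : Set A) : Prop :=
  StronglyJustified D v S a ∧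
  ∀ S' : Set A, S'.ncard < S.ncard → ¬ StronglyJustified D v S' a

/-- An interpretation is strongly admissible iff every argument assigned `t`/`f`
is strongly acceptable/deniable w.r.t. `v` and some set `S`. -/
def StronglyAdmissible {A : Type*} [DecidableEq A] (D : ADF A) (v : A → TV) : Prop :=
  ∀ a : A, v a ≠ TV.u → ∃ S : Set A, StronglyJustified D v S a

/-- `g` is the grounded interpretation of `D`: the least fixed point of `Γ_D`. -/
def IsGrounded {A : Type*} (D : ADF A) (g : A → TV) : Prop :=
  Gamma D g = g ∧ ∀ w : A → TV, Gamma D w = w → ILE g w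

/-- An interpretation is admissible iff `v ≤_i Γ_D(v)`. -/
def Admissible {A : Type*} (D : ADF A) (v : A → TV) : Prop :=
  ILE v (Gamma D v)

/-- An interpretation is conflict-free. -/
def ConflictFree {A : Type*} (D : ADF A) (v : A → TV) : Prop :=
  ∀ a : A, (v a = TV.t → ∃ w : A → Bool, Completes w v ∧ D.C a w = true) ∧
           (v a = TV.f → Unsat (D.C a) v)

/-- The join of two interpretations: take `v`'s value where defined, else `w`'s. -/
def joinI {A : Type*} (v w : A → TV) : A → TV :=
  fun a => if v a = TV.u then w a else v a

/-! Every argument `p` used in a justification over `S` is itself justified relative to an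
excluded set containing `p`, and shrinking that set to `{p}` only makes more parents available;
so `p` is strongly justified over `S`. Hence the members of `S` that are strongly justified over
`S` already justify `a`, and when `S` is a least set they exhaust it. -/

section

variable {A : Type*} [DecidableEq A] {D : ADF A} {v : A → TV} {S S' E E' : Set A} {a : A}

theorem SJrel.ne_u (h : SJrel D v S E a) : v a ≠ TV.u := by
  cases h <;> simp_all only [ne_eq, reduceCtorEq, not_false_eq_true]

theorem SJrel.mono (h : SJrel D v S E a) (hS : S ⊆ S') (hE : E' ⊆ E) :
    SJrel D v S' E' a := by
  induction h generalizing E' with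
  | acc E a P ha hP hirr _ ih =>
    exact .acc E' a P ha (hP.trans (Set.sdiff_subset_sdiff (Set.inter_subset_inter_right _ hS) hE))
      hirr fun p hp => ih p hp (Set.union_subset_union_left _ hE)
  | den E a P ha hP hunsat _ ih =>
    exact .den E' a P ha (hP.trans (Set.sdiff_subset_sdiff (Set.inter_subset_inter_right _ hS) hE))
      hunsat fun p hp => ih p hp (Set.union_subset_union_left _ hE)

theorem SJrel.stronglyJustified (h : SJrel D v S E a) (ha : a ∈ E) :
    StronglyJustified D v S a :=
  h.mono subset_rfl (Set.singleton_subset_iff.mpr ha)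

theorem subset_sep_stronglyJustified {P Q : Set A} (hP : P ⊆ (Q ∩ S) \ E)
    (hrec : ∀ p ∈ P, SJrel D v S (E ∪ {p}) p) :
    P ⊆ (Q ∩ {s ∈ S | StronglyJustified D v S s}) \ E := fun p hp =>
  have ⟨⟨hpQ, hpS⟩, hpE⟩ := hP hp
  ⟨⟨hpQ, hpS, (hrec p hp).stronglyJustified (Or.inr rfl)⟩, hpE⟩

theorem SJrel.sep_stronglyJustified (h : SJrel D v S E a) :
    SJrel D v {s ∈ S | StronglyJustified D v S s} E a := by
  induction h with
  | acc E a P ha hP hirr hrec ih =>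
    exact .acc E a P ha (subset_sep_stronglyJustified hP hrec) hirr ih
  | den E a P ha hP hunsat hrec ih =>
    exact .den E a P ha (subset_sep_stronglyJustified hP hrec) hunsat ih

theorem LeastSet.eq_of_subset (hleast : LeastSet D v a S) (hfin : S.Finite) (hS' : S' ⊆ S)
    (h : StronglyJustified D v S' a) : S' = S :=
  Set.eq_of_subset_of_ncard_le hS' (not_lt.mp fun hlt => hleast.2 S' hlt h) hfin

end

theorem least_set_members_strongly_justified_general {A : Type*} [DecidableEq A]
    (D : ADF A) (v : A → TV) (a : A) (S : Set A) (hfin : S.Finite) (hleast : LeastSet D v a S) :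
    ∀ s ∈ S, v s ≠ TV.u ∧ StronglyJustified D v S s := by
  intro s hs
  have hsep : {s ∈ S | StronglyJustified D v S s} = S :=
    hleast.eq_of_subset hfin (Set.sep_subset _ _) hleast.1.sep_stronglyJustified
  have hjust : StronglyJustified D v S s := (hsep.ge hs).2
  exact ⟨hjust.ne_u, hjust⟩

/-- If `a` is strongly acceptable/deniable w.r.t. `v` and a least set `S`,
then every member of `S` has a defined truth value in `v` and is itself strongly
acceptable/deniable w.r.t. `v` and some subset of `S`. -/
theorem least_set_members_strongly_justified {A : Type*} [Fintype A] [DecidableEq A]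
    (D : ADF A) (v : A → TV) (a : A) (S : Set A) (hleast : LeastSet D v a S) :
    ∀ s ∈ S, v s ≠ TV.u ∧ ∃ S' : Set A, S' ⊆ S ∧ StronglyJustified D v S' s := fun s hs =>
  have ⟨hne, hjust⟩ :=
    least_set_members_strongly_justified_general D v a S S.toFinite hleast s hs
  ⟨hne, S, subset_rfl, hjust⟩
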